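/- arXiv:2512.15868 — 7 statements merged into one kernel-verified Lean document; each statement's English description precedes it below -/
import Mathlib

section
/- Let G be a finite commutative group and let M be a Lagrangian subgroup of the anyon group A_G = G × Ĝ, i.e. a subgroup such that θ(a) = 1 for all a ∈ M, B(a, a') = 1 for all a, a' ∈ M, and every b ∈ A_G satisfying B(a, b) = 1 for all a ∈ M lies in M. Then the cardinality of M equals the cardinality of G. -/
/-!
The braiding phase is a perfect pairing on `A = G × Ĝ`: characters separate the points of `G`, so
`b ↦ B(·, b)` is an injective, hence (by counting) bijective, homomorphism from `A` to its
character group. Since characters of a subgroup extend to `A`, restricting to `M` gives a surjection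
from `A` onto the characters of `M`. By isotropy and maximality its kernel is exactly `M`, so
`|G|² = |A| = |M| · |M̂| = |M|²`.
-/

/-- The homomorphism `b ↦ B(·, b)` from the anyon group `G × Ĝ` to its character group. -/
def braidingHom (G : Type*) [CommGroup G] :
    (G × (G →* ℂˣ)) →* ((G × (G →* ℂˣ)) →* ℂˣ) where
  toFun b :=
    { toFun := fun a => a.2 b.1 * b.2 a.1
      map_one' := by simp
      map_mul' := fun a a' => by
        simp only [Prod.fst_mul, Prod.snd_mul, MonoidHom.mul_apply, map_mul]
        exact mul_mul_mul_comm _ _ _ _ }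
  map_one' := by ext; simp
  map_mul' b b' := by
    refine MonoidHom.ext fun a => ?_
    simp only [MonoidHom.coe_mk, OneHom.coe_mk, Prod.fst_mul, Prod.snd_mul, MonoidHom.mul_apply,
      map_mul]
    exact mul_mul_mul_comm _ _ _ _

@[simp]
theorem braidingHom_apply {G : Type*} [CommGroup G] (a b : G × (G →* ℂˣ)) :
    braidingHom G b a = a.2 b.1 * b.2 a.1 := rfl

theorem braidingHom_injective (G : Type*) [CommGroup G] [Finite G] :
    Function.Injective (braidingHom G) := by
  refine (injective_iff_map_eq_one _).2 fun b hb => ?_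
  have h (a : G × (G →* ℂˣ)) : a.2 b.1 * b.2 a.1 = 1 := DFunLike.congr_fun hb a
  refine Prod.ext ?_ (MonoidHom.ext fun g => by simpa using h (g, 1))
  refine (CommGroup.forall_apply_eq_apply_iff G (M := ℂ)).1 fun φ => ?_
  simpa using h (1, φ)

/-- For a nondegenerate pairing on a finite abelian group `A`, a subgroup equal to its own
annihilator has order the square root of `|A|`. -/
theorem card_mul_self_of_self_annihilating {A : Type*} [CommGroup A] [Finite A]
    (φ : A →* (A →* ℂˣ)) (hφ : Function.Injective φ) (M : Subgroup A)
    (hM : ∀ b, b ∈ M ↔ ∀ a ∈ M, φ b a = 1) :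
    Nat.card A = Nat.card M * Nat.card M := by
  have hbij : Function.Bijective φ := (Nat.bijective_iff_injective_and_card _).2
    ⟨hφ, (CommGroup.card_monoidHom_of_hasEnoughRootsOfUnity A ℂ).symm⟩
  let f : A →* (M →* ℂˣ) := (MonoidHom.domRestrictHom M ℂˣ).comp φ
  have hf : Function.Surjective f := (MonoidHom.domRestrict_surjective ℂ M).comp hbij.2
  have hker : f.ker = M := by
    ext b
    rw [hM b]
    simp [f, MonoidHom.mem_ker, MonoidHom.domRestrict_eq_one_iff]
  have hcard := Subgroup.card_eq_card_quotient_mul_card_subgroup f.ker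
  rwa [Nat.card_congr (QuotientGroup.quotientKerEquivOfSurjective f hf).toEquiv, hker,
    CommGroup.card_monoidHom_of_hasEnoughRootsOfUnity] at hcard

/-- A Lagrangian subgroup `M` of the anyon group `A_G = G × Ĝ` of the quantum double of a
finite commutative group `G` (all elements are bosons, braid trivially with each other, and
`M` is maximal with this property) has cardinality `|G|`. -/
theorem stmt2 (G : Type*) [CommGroup G] [Fintype G]
    (M : Subgroup (G × (G →* ℂˣ)))
    (hθ : ∀ a ∈ M, a.2 a.1 = 1)
    (hB : ∀ a ∈ M, ∀ a' ∈ M, a.2 a'.1 * a'.2 a.1 = 1)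
    (hmax : ∀ b : G × (G →* ℂˣ), (∀ a ∈ M, a.2 b.1 * b.2 a.1 = 1) → b ∈ M) :
    Nat.card M = Nat.card G := by
  have hcard := card_mul_self_of_self_annihilating (braidingHom G) (braidingHom_injective G) M
    fun b => ⟨fun h a ha => hB a ha b h, hmax b⟩
  rw [Nat.card_prod, CommGroup.card_monoidHom_of_hasEnoughRootsOfUnity] at hcard
  exact (Nat.mul_self_inj.1 hcard).symm
end

section
/- Let G be a finite commutative group and let M be a subgroup of the anyon group A_G = G × Ĝ such that B(a, a') = 1 for all a, a' ∈ M and the cardinality of M equals the cardinality of G. Then M is maximal isotropic: every b ∈ A_G satisfying B(a, b) = 1 for all a ∈ M lies in M. -/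
/-!
The braiding `B` is a nondegenerate pairing on `A = G × Ĝ`: pairing with `(1, α)` recovers `α g`
for every character `α`, hence `g`, because characters separate the points of a finite commutative
group, and pairing with `(g, 1)` recovers the character component. So `b ↦ B(-, b)` embeds the
orthogonal complement `M⊥` into the group of characters of `A` that are trivial on `M`, which has
order `|A ⧸ M| = |G|² / |M| = |G| = |M|`. Isotropy says `M ⊆ M⊥`, so `|M⊥| ≤ |M|` forces `M⊥ = M`.
-/

/-- The character `a ↦ B(a, b)` of `G × Ĝ` given by braiding with the anyon `b`. -/
def braidChar {G : Type*} [CommGroup G] (b : G × (G →* ℂˣ)) : G × (G →* ℂˣ) →* ℂˣ :=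
  (MonoidHom.eval b.1).comp (MonoidHom.snd G (G →* ℂˣ)) * b.2.comp (MonoidHom.fst G (G →* ℂˣ))

theorem braidChar_apply {G : Type*} [CommGroup G] (a b : G × (G →* ℂˣ)) :
    braidChar b a = a.2 b.1 * b.2 a.1 := rfl

/-- Nondegeneracy of the braiding. -/
theorem braidChar_injective {G : Type*} [CommGroup G] [Finite G] :
    Function.Injective (braidChar (G := G)) := by
  have : NeZero (Monoid.exponent G) := ⟨Monoid.exponent_ne_zero_of_finite⟩
  intro b c h
  refine Prod.ext ?_ (MonoidHom.ext fun g ↦ ?_)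
  · refine (CommGroup.forall_apply_eq_apply_iff G (M := ℂ)).mp fun α ↦ ?_
    simpa [braidChar_apply] using DFunLike.congr_fun h (1, α)
  · simpa [braidChar_apply] using DFunLike.congr_fun h (g, 1)

/-- For an injective `φ : A → Â`, the elements `b` with `φ b` trivial on `M` are at most
`|A ⧸ M|` in number; so if `|M|² = |A|` and `M` is among them, then `M` is all of them. -/
theorem mem_of_forall_apply_eq_one {A : Type*} [CommGroup A] [Finite A] (φ : A → (A →* ℂˣ))
    (hφ : Function.Injective φ) (M : Subgroup A) (hM : ∀ a ∈ M, ∀ b ∈ M, φ b a = 1)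
    (hcard : Nat.card A = Nat.card M * Nat.card M) (b : A) (hb : ∀ a ∈ M, φ b a = 1) :
    b ∈ M := by
  have : NeZero (Monoid.exponent A) := ⟨Monoid.exponent_ne_zero_of_finite⟩
  -- `K` is the group of characters of `A` that are trivial on `M`.
  set K := (MonoidHom.domRestrictHom M ℂˣ).ker
  have hK : Nat.card K = Nat.card M := by
    refine (CommGroup.card_domRestrictHom_ker ℂ M).trans ?_
    rw [M.card_eq_card_quotient_mul_card_subgroup] at hcard
    exact Nat.eq_of_mul_eq_mul_right Nat.card_pos hcard
  set S : Set A := {b | ∀ a ∈ M, φ b a = 1}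
  have hMS : (M : Set A) ⊆ S := fun b hb a ha ↦ hM a ha b hb
  have hSK : S.ncard ≤ (K : Set (A →* ℂˣ)).ncard :=
    Set.ncard_le_ncard_of_injOn φ (fun b hb ↦ MonoidHom.ext fun a ↦ hb a a.2) hφ.injOn
      (Set.toFinite _)
  have hEq := Set.eq_of_subset_of_ncard_le hMS (hSK.trans hK.le) (Set.toFinite _)
  exact hEq.symm.subset hb

/-- An isotropic subgroup `M` of the anyon group `A_G = G × Ĝ` with `|M| = |G|` is
maximal isotropic: any `b` braiding trivially with all of `M` lies in `M`. -/
theorem stmt3 (G : Type*) [CommGroup G] [Fintype G]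
    (M : Subgroup (G × (G →* ℂˣ)))
    (hB : ∀ a ∈ M, ∀ a' ∈ M, a.2 a'.1 * a'.2 a.1 = 1)
    (hcard : Nat.card M = Nat.card G) :
    ∀ b : G × (G →* ℂˣ), (∀ a ∈ M, a.2 b.1 * b.2 a.1 = 1) → b ∈ M := by
  have : NeZero (Monoid.exponent G) := ⟨Monoid.exponent_ne_zero_of_finite⟩
  refine mem_of_forall_apply_eq_one (A := G × (G →* ℂˣ)) braidChar braidChar_injective M hB ?_
  rw [Nat.card_prod, CommGroup.card_monoidHom_of_hasEnoughRootsOfUnity, hcard]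
end

section
/- Let G be a finite commutative group and H a subgroup of G. Then M_H := { (h, β) ∈ G × Ĝ : h ∈ H and β(x) = 1 for all x ∈ H } is a Lagrangian subgroup of the anyon group A_G = G × Ĝ: it is a subgroup, θ(a) = 1 for all a ∈ M_H, B(a, a') = 1 for all a, a' ∈ M_H, and every b ∈ A_G with B(a, b) = 1 for all a ∈ M_H lies in M_H. -/
/-!
The first two claims hold because characters in the annihilator of `H` are trivial on `H`.
For maximality, pair `b = (g, β)` with the elements `(h, 1)`, `h ∈ H`, to see that `β` is
trivial on `H`, and with the elements `(1, α)`, `α` in the annihilator of `H`, to see that every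
character trivial on `H` is trivial at `g`. Since complex characters separate the points of the
finite abelian group `G ⧸ H`, the latter forces `g ∈ H`
(`CommGroup.exists_apply_ne_one_of_hasEnoughRootsOfUnity`).
-/

/-- The annihilator of a subgroup `H ≤ G` inside the character group `Ĝ = G →* ℂˣ`. -/
def annihilator {G : Type*} [CommGroup G] (H : Subgroup G) : Subgroup (G →* ℂˣ) where
  carrier := {β | ∀ x ∈ H, β x = 1}
  one_mem' := fun x _ => rfl
  mul_mem' := by
    intro a b ha hb x hx
    simp [ha x hx, hb x hx]
  inv_mem' := by
    intro a ha x hx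
    simp [ha x hx]

/-- For a subgroup `H ≤ G`, the set `M_H = { (h, β) : h ∈ H, β(x) = 1 ∀ x ∈ H }` is a
Lagrangian subgroup of `A_G = G × Ĝ`: the exchange phase is `1` on it, the braiding is `1`
on it, and it is maximal. -/
theorem stmt7 (G : Type*) [CommGroup G] [Fintype G] (H : Subgroup G) :
    (∀ a ∈ H.prod (annihilator H), a.2 a.1 = 1) ∧
    (∀ a ∈ H.prod (annihilator H), ∀ a' ∈ H.prod (annihilator H),
        a.2 a'.1 * a'.2 a.1 = 1) ∧
    (∀ b : G × (G →* ℂˣ),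
        (∀ a ∈ H.prod (annihilator H), a.2 b.1 * b.2 a.1 = 1) →
        b ∈ H.prod (annihilator H)) := by
  refine ⟨fun a ha => ha.2 _ ha.1, fun a ha a' ha' => ?_, fun b hb => ⟨?_, fun x hx => ?_⟩⟩
  · rw [ha.2 _ ha'.1, ha'.2 _ ha.1, one_mul]
  · by_contra hg
    have hne : (QuotientGroup.mk b.1 : G ⧸ H) ≠ 1 := fun h =>
      hg ((QuotientGroup.eq_one_iff b.1).1 h)
    obtain ⟨φ, hφ⟩ :=
      CommGroup.exists_apply_ne_one_of_hasEnoughRootsOfUnity (G ⧸ H) ℂ hne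
    have hann : φ.comp (QuotientGroup.mk' H) ∈ annihilator H := fun x hx => by
      simp [(QuotientGroup.eq_one_iff x).2 hx]
    have h := hb (1, φ.comp (QuotientGroup.mk' H)) ⟨H.one_mem, hann⟩
    exact hφ (by simpa using h)
  · simpa using hb (x, 1) ⟨hx, (annihilator H).one_mem⟩
end

section
/- Let G be a finite commutative group and let M be a Lagrangian subgroup of the anyon group A_G = G × Ĝ. Then the quotient group A_G / M, whose elements are the equivalence classes of boundary excitations, has cardinality equal to the cardinality of G. -/
/-!
The braiding phase `B` is a bicharacter on the anyon group `A = G × Ĝ`. Characters separate the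
points of `G`, so `B` is nondegenerate (`braiding_injective`), and since `|Â| = |A|` it identifies
`A` with its dual `Â`. A Lagrangian subgroup `M` is its own orthogonal complement for `B`, so this
identification carries `M` onto the annihilator of `M` in `Â`, which has `|A / M|` elements
(`card_eq_card_quotient_of_self_orthogonal`). Hence `|M| = |A / M|`, and
`|A / M| ^ 2 = |A| = |G| ^ 2`.
-/

/-- An injection `Φ` of a finite commutative group `A` into its dual is a bijection, because the
two have the same cardinality. It therefore matches a subgroup `M` that is its own orthogonal
complement for `(b, a) ↦ Φ b a` with the annihilator of `M`, which has order `|A / M|`. -/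
lemma card_eq_card_quotient_of_self_orthogonal {A : Type*} [CommGroup A] [Finite A]
    (Φ : A → A →* ℂˣ) (hΦ : Function.Injective Φ) (M : Subgroup A)
    (hM : ∀ b, b ∈ M ↔ ∀ a ∈ M, Φ b a = 1) :
    Nat.card M = Nat.card (A ⧸ M) := by
  have hbij : Function.Bijective Φ := (Nat.bijective_iff_injective_and_card _).2
    ⟨hΦ, (CommGroup.card_monoidHom_of_hasEnoughRootsOfUnity A ℂ).symm⟩
  rw [← CommGroup.card_domRestrictHom_ker ℂ M]
  refine Nat.card_congr ((Equiv.ofBijective Φ hbij).subtypeEquiv fun b => ?_)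
  rw [hM, MonoidHom.mem_ker, MonoidHom.domRestrictHom_apply, MonoidHom.domRestrict_eq_one_iff]
  rfl

/-- The character `a ↦ B(a, b)` of the anyon group given by the braiding phase with `b`. -/
def braiding {G : Type*} [CommGroup G] (b : G × (G →* ℂˣ)) : (G × (G →* ℂˣ)) →* ℂˣ where
  toFun a := a.2 b.1 * b.2 a.1
  map_one' := by simp
  map_mul' x y := by simp [mul_mul_mul_comm]

lemma braiding_injective (G : Type*) [CommGroup G] [Finite G] :
    Function.Injective (braiding (G := G)) := by
  intro b c hbc
  have h (a : G × (G →* ℂˣ)) : a.2 b.1 * b.2 a.1 = a.2 c.1 * c.2 a.1 := DFunLike.congr_fun hbc a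
  refine Prod.ext ?_ ?_
  · refine (CommGroup.forall_apply_eq_apply_iff G (M := ℂ)).1 fun φ => ?_
    simpa using h (1, φ)
  · refine MonoidHom.ext fun g => ?_
    simpa using h (g, 1)

/-- For a Lagrangian subgroup `M` of the anyon group `A_G = G × Ĝ`, the quotient group
`A_G / M` of equivalence classes of boundary excitations has cardinality `|G|`. -/
theorem stmt8 (G : Type*) [CommGroup G] [Fintype G]
    (M : Subgroup (G × (G →* ℂˣ)))
    (hθ : ∀ a ∈ M, a.2 a.1 = 1)
    (hB : ∀ a ∈ M, ∀ a' ∈ M, a.2 a'.1 * a'.2 a.1 = 1)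
    (hmax : ∀ b : G × (G →* ℂˣ), (∀ a ∈ M, a.2 b.1 * b.2 a.1 = 1) → b ∈ M) :
    Nat.card ((G × (G →* ℂˣ)) ⧸ M) = Nat.card G := by
  have hcard : Nat.card M = Nat.card ((G × (G →* ℂˣ)) ⧸ M) :=
    card_eq_card_quotient_of_self_orthogonal braiding (braiding_injective G) M
      fun b => ⟨fun hb a ha => hB a ha b hb, hmax b⟩
  have hA := M.card_eq_card_quotient_mul_card_subgroup
  rw [hcard, Nat.card_prod, CommGroup.card_monoidHom_of_hasEnoughRootsOfUnity G ℂ] at hA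
  exact (Nat.mul_self_inj.1 hA).symm
end

section
/- Let p be a natural number and k : Fin p → ℕ with k(i) ≥ 1 for all i, and let G := ∏_{i} ℤ/k(i) (a finite commutative group, written additively). The set of alternating bicharacters on G, i.e. functions B : G → G → ℂˣ satisfying B(g + g', h) = B(g, h)·B(g', h), B(g, h + h') = B(g, h)·B(g, h'), and B(g, g) = 1 for all g, g', h, h' ∈ G, has cardinality ∏_{i < j} gcd(k(i), k(j)), the product taken over all pairs i < j in Fin p. -/
/-!
Let `e i` be the standard generators of `G = ∏ ℤ/k i`. Sending an alternating bicharacter `B` to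
the family `(B (e i) (e j))_{i < j}` is a bijection onto families of roots of unity, the entry at
`(i, j)` ranging over the `gcd (k i) (k j)`-th roots of unity.

* The value `B (e i) (e j)` is killed by both `k i` and `k j`, hence by their gcd
  (`AltBichar.apply_single_mem`).
* Injectivity: a bicharacter is determined by its values on pairs of generators, and alternation
  gives `B (e i) (e i) = 1` and `B (e j) (e i) = (B (e i) (e j))⁻¹`
  (`AltBichar.ext_of_lt`).
* Surjectivity: a family `c` is realized by
  `B g h = ∏_{i < j} c i j ^ (g i * h j) / c i j ^ (h i * g j)`, where the exponents, taken as
  natural representatives, matter only modulo `gcd (k i) (k j)` (`zpair_add_left`,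
  `zpair_add_right`).

Since `ℂ` contains exactly `n` roots of unity of order dividing `n ≥ 1`, the count follows.
-/

/-- The pairing `(x, y) ↦ ω ^ (x * y)` of `ℤ/a` and `ℤ/b`, computed on natural representatives;
it is biadditive when `ω` is a `gcd a b`-th root of unity. -/
def zpair {a b : ℕ} (ω : ℂˣ) (x : ZMod a) (y : ZMod b) : ℂˣ := ω ^ (x.val * y.val)


theorem zpair_add_left {a b : ℕ} [NeZero a] {ω : ℂˣ} (ha : ω ^ a = 1) (x x' : ZMod a)
    (y : ZMod b) : zpair ω (x + x') y = zpair ω x y * zpair ω x' y := by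
  unfold zpair
  rw [← pow_add, ← add_mul, ZMod.val_add, pow_mul, pow_mul, ← pow_eq_pow_mod _ ha]

theorem zpair_add_right {a b : ℕ} [NeZero b] {ω : ℂˣ} (hb : ω ^ b = 1) (x : ZMod a)
    (y y' : ZMod b) : zpair ω x (y + y') = zpair ω x y * zpair ω x y' := by
  unfold zpair
  rw [← pow_add, ← mul_add, ZMod.val_add, mul_comm, mul_comm x.val, pow_mul, pow_mul,
    ← pow_eq_pow_mod _ hb]

theorem zpair_zero_left {a b : ℕ} (ω : ℂˣ) (y : ZMod b) : zpair ω (0 : ZMod a) y = 1 := by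
  simp [zpair]

theorem zpair_zero_right {a b : ℕ} (ω : ℂˣ) (x : ZMod a) : zpair ω x (0 : ZMod b) = 1 := by
  simp [zpair]

theorem zpair_one_one {a b : ℕ} {ω : ℂˣ} (ha : ω ^ a = 1) (hb : ω ^ b = 1) :
    zpair ω (1 : ZMod a) (1 : ZMod b) = ω := by
  -- The representative of `1 : ZMod n` is `1 % n`, which is `0` when `n = 1`.
  unfold zpair
  rw [ZMod.val_one_eq_one_mod, ZMod.val_one_eq_one_mod, pow_mul, ← pow_eq_pow_mod _ ha, pow_one,
    ← pow_eq_pow_mod _ hb, pow_one]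

/-- Alternating bicharacters on `∏ ℤ/k i`. -/
abbrev AltBichar {p : ℕ} (k : Fin p → ℕ) : Type :=
  {B : (∀ i, ZMod (k i)) → (∀ i, ZMod (k i)) → ℂˣ //
      (∀ g g' h, B (g + g') h = B g h * B g' h) ∧
      (∀ g h h', B g (h + h') = B g h * B g h') ∧
      (∀ g, B g g = 1)}

namespace AltBichar

variable {p : ℕ} {k : Fin p → ℕ}

/-- A bicharacter as a character in its left argument. -/
def left (B : AltBichar k) (h : ∀ i, ZMod (k i)) : (∀ i, ZMod (k i)) →+ Additive ℂˣ :=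
  AddMonoidHom.mk' (fun g => Additive.ofMul (B.1 g h)) fun g g' => by
    rw [B.2.1, ofMul_mul]

/-- A bicharacter as a character in its right argument. -/
def right (B : AltBichar k) (g : ∀ i, ZMod (k i)) : (∀ i, ZMod (k i)) →+ Additive ℂˣ :=
  AddMonoidHom.mk' (fun h => Additive.ofMul (B.1 g h)) fun h h' => by
    rw [B.2.2.1, ofMul_mul]

/-- A character of `∏ ℤ/k i` is determined by its values on the standard generators. -/
theorem char_ext (hk : ∀ i, 1 ≤ k i) (φ ψ : (∀ i, ZMod (k i)) →+ Additive ℂˣ)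
    (H : ∀ i, φ (Pi.single i 1) = ψ (Pi.single i 1)) : φ = ψ := by
  refine AddMonoidHom.functions_ext _ φ ψ fun i x => ?_
  have : NeZero (k i) := ⟨Nat.one_le_iff_ne_zero.mp (hk i)⟩
  have hx : (Pi.single i x : ∀ i, ZMod (k i)) = x.val • Pi.single i 1 := by
    rw [← Pi.single_smul, nsmul_eq_mul, mul_one, ZMod.natCast_zmod_val]
  rw [hx, map_nsmul, map_nsmul, H]

/-- Alternation implies antisymmetry: expand `B (g + h) (g + h) = 1`. -/
theorem swap (B : AltBichar k) (g h : ∀ i, ZMod (k i)) : B.1 g h = (B.1 h g)⁻¹ := by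
  have H := B.2.2.2 (g + h)
  rw [B.2.1, B.2.2.1, B.2.2.1, B.2.2.2, B.2.2.2, one_mul, mul_one] at H
  exact eq_inv_of_mul_eq_one_left H

theorem ext_of_lt (hk : ∀ i, 1 ≤ k i) (B C : AltBichar k)
    (H : ∀ i j, i < j → B.1 (Pi.single i 1) (Pi.single j 1) =
      C.1 (Pi.single i 1) (Pi.single j 1)) : B = C := by
  have H' : ∀ i j, B.1 (Pi.single i 1) (Pi.single j 1) =
      C.1 (Pi.single i 1) (Pi.single j 1) := by
    intro i j
    rcases lt_trichotomy i j with h | rfl | h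
    · exact H i j h
    · rw [B.2.2.2, C.2.2.2]
    · rw [B.swap, C.swap, H j i h]
  have H1 : ∀ i h, B.1 (Pi.single i 1) h = C.1 (Pi.single i 1) h := fun i h =>
    Additive.ofMul.injective <| DFunLike.congr_fun
      (char_ext hk (B.right (Pi.single i 1)) (C.right (Pi.single i 1))
        fun j => congrArg Additive.ofMul (H' i j)) h
  ext1
  funext g h
  exact Additive.ofMul.injective <| DFunLike.congr_fun
    (char_ext hk (B.left h) (C.left h) fun i => congrArg Additive.ofMul (H1 i h)) g

theorem apply_single_mem (B : AltBichar k) (i j : Fin p) :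
    B.1 (Pi.single i 1) (Pi.single j 1) ∈ rootsOfUnity (Nat.gcd (k i) (k j)) ℂ := by
  have key : ∀ l, k l • (Pi.single l 1 : ∀ i, ZMod (k i)) = 0 := fun l => by
    rw [← Pi.single_smul, nsmul_eq_mul, ZMod.natCast_self, zero_mul, Pi.single_zero]
  rw [mem_rootsOfUnity]
  refine pow_gcd_eq_one.mpr ⟨?_, ?_⟩
  · have := map_nsmul (B.left (Pi.single j 1)) (k i) (Pi.single i 1)
    rw [key, map_zero] at this
    exact this.symm
  · have := map_nsmul (B.right (Pi.single i 1)) (k j) (Pi.single j 1)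
    rw [key, map_zero] at this
    exact this.symm

/-- The values of a bicharacter on the pairs `i < j` of standard generators. -/
def values (B : AltBichar k) (i : Fin p) (j : {j // i < j}) :
    rootsOfUnity (Nat.gcd (k i) (k j)) ℂ :=
  ⟨B.1 (Pi.single i 1) (Pi.single j.1 1), B.apply_single_mem i j⟩

/-- The alternating bicharacter `(g, h) ↦ ∏_{i < j} c i j ^ (g i * h j - h i * g j)`. -/
def ofValues (hk : ∀ i, 1 ≤ k i)
    (c : ∀ (i : Fin p) (j : {j // i < j}), rootsOfUnity (Nat.gcd (k i) (k j)) ℂ) :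
    AltBichar k :=
  have hn : ∀ i, NeZero (k i) := fun i => ⟨Nat.one_le_iff_ne_zero.mp (hk i)⟩
  have hc : ∀ i j, (c i j : ℂˣ) ^ k i = 1 ∧ (c i j : ℂˣ) ^ k j = 1 := fun i j =>
    pow_gcd_eq_one.mp ((mem_rootsOfUnity _ _).mp (c i j).2)
  ⟨fun g h => ∏ i, ∏ j : {j // i < j},
      zpair (c i j : ℂˣ) (g i) (h j) * (zpair (c i j : ℂˣ) (h i) (g j))⁻¹, by
    refine ⟨fun g g' h => ?_, fun g h h' => ?_, fun g => ?_⟩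
    · simp only [← Finset.prod_mul_distrib]
      refine Finset.prod_congr rfl fun i _ => Finset.prod_congr rfl fun j _ => ?_
      rw [Pi.add_apply, Pi.add_apply, zpair_add_left (hc i j).1, zpair_add_right (hc i j).2,
        mul_inv, mul_mul_mul_comm]
    · simp only [← Finset.prod_mul_distrib]
      refine Finset.prod_congr rfl fun i _ => Finset.prod_congr rfl fun j _ => ?_
      rw [Pi.add_apply, Pi.add_apply, zpair_add_left (hc i j).1, zpair_add_right (hc i j).2,
        mul_inv, mul_mul_mul_comm]
    · simp⟩

theorem values_ofValues (hk : ∀ i, 1 ≤ k i)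
    (c : ∀ (i : Fin p) (j : {j // i < j}), rootsOfUnity (Nat.gcd (k i) (k j)) ℂ) :
    (ofValues hk c).values = c := by
  funext a b
  obtain ⟨b, hab⟩ := b
  apply Subtype.ext
  -- In the second factor a nontrivial term would need `i = b` and `j = a`, against `i < j`.
  have h2 : ∀ (i : Fin p) (j : {j // i < j}),
      zpair (c i j : ℂˣ) ((Pi.single b 1 : ∀ i, ZMod (k i)) i)
        ((Pi.single a 1 : ∀ i, ZMod (k i)) j) = 1 := by
    rintro i ⟨j, hij⟩
    by_cases hi : i = b
    · have hj : j ≠ a := by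
        rintro rfl
        exact absurd (hi ▸ hij) hab.asymm
      rw [Pi.single_eq_of_ne hj, zpair_zero_right]
    · rw [Pi.single_eq_of_ne hi, zpair_zero_left]
  change ∏ i, ∏ j : {j // i < j}, zpair (c i j : ℂˣ) ((Pi.single a 1 : ∀ i, ZMod (k i)) i)
    ((Pi.single b 1 : ∀ i, ZMod (k i)) j) * (zpair (c i j : ℂˣ)
      ((Pi.single b 1 : ∀ i, ZMod (k i)) i) ((Pi.single a 1 : ∀ i, ZMod (k i)) j))⁻¹ = _
  simp only [h2, inv_one, mul_one]
  rw [Finset.prod_eq_single a, Finset.prod_eq_single ⟨b, hab⟩]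
  · have hc := pow_gcd_eq_one.mp ((mem_rootsOfUnity _ _).mp (c a ⟨b, hab⟩).2)
    rw [Pi.single_eq_same, Pi.single_eq_same]
    exact zpair_one_one hc.1 hc.2
  · intro j _ hj
    rw [Pi.single_eq_of_ne (fun h => hj (Subtype.ext h)), zpair_zero_right]
  · simp
  · intro i _ hi
    refine Finset.prod_eq_one fun j _ => ?_
    rw [Pi.single_eq_of_ne hi, zpair_zero_left]
  · simp

theorem values_bijective (hk : ∀ i, 1 ≤ k i) :
    Function.Bijective (values : AltBichar k → _) :=
  ⟨fun B C h => ext_of_lt hk B C fun i j hij =>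
    congrArg Subtype.val (congrFun (congrFun h i) ⟨j, hij⟩),
    fun c => ⟨ofValues hk c, values_ofValues hk c⟩⟩

end AltBichar


/-- For `G = ℤ/k(0) × … × ℤ/k(p−1)` (each `k i ≥ 1`), the number of alternating
bicharacters `B : G × G → ℂˣ` (homomorphic in each argument, with `B(g,g) = 1`) is
`∏_{i<j} gcd(k i, k j)`. This reproduces the classification of 1D SPT phases with
symmetry group `G`. -/
theorem stmt17 (p : ℕ) (k : Fin p → ℕ) (hk : ∀ i, 1 ≤ k i) :
    Nat.card {B : (∀ i, ZMod (k i)) → (∀ i, ZMod (k i)) → ℂˣ //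
      (∀ g g' h, B (g + g') h = B g h * B g' h) ∧
      (∀ g h h', B g (h + h') = B g h * B g h') ∧
      (∀ g, B g g = 1)} =
    ∏ i : Fin p, ∏ j ∈ Finset.univ.filter (fun j => i < j), Nat.gcd (k i) (k j) := by
  rw [Nat.card_congr (Equiv.ofBijective _ (AltBichar.values_bijective hk)), Nat.card_pi]
  refine Finset.prod_congr rfl fun i _ => ?_
  rw [Nat.card_pi, Finset.prod_subtype (p := fun j => i < j) _ (by simp)]
  refine Finset.prod_congr rfl fun j _ => ?_
  have : NeZero (Nat.gcd (k i) (k j)) := ⟨(Nat.gcd_pos_of_pos_left _ (hk i)).ne'⟩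
  exact Complex.card_rootsOfUnity _
end

section
/- Let n ≥ 2 and z : Fin n → ℤ/2 be a spin configuration, and define the phase exponent E(z) := Σ_{i=0}^{n−2} ( val(z(i+1)) + val(z(i))·val(z(i+1)) ) ∈ ℕ, where val takes the representative in {0,1}. Let z̄ denote the globally flipped configuration z̄(i) = z(i) + 1. Then (−1)^{E(z)} · (−1)^{E(z̄)} = (−1)^{val(z(0)) + val(z(n−1))}. (This encodes the operator identity P_OBC² = Z₁Z_L for the non-onsite ℤ₂ symmetry with open boundary conditions.) -/
/-!
Writing `a = z_i`, `b = z_{i+1}` as bits, one bond contributes to `E(z) + E(z̄)` the number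
`(b + ab) + ((1 - b) + (1 - a)(1 - b)) = 2 - a - b + 2ab`, which has the parity of `a + b`
(`bond_sign`). The total sign is therefore `∏ᵢ s_i s_{i+1}` with `s_i = (-1)^{z_i}`; every interior
sign occurs twice and squares to one, so only the two boundary signs survive (`prod_bond_sign`).
-/

/-- The phase exponent `E(z) = Σ_{i=0}^{n−2} (z_{i+1} + z_i·z_{i+1})` (bits in `{0,1}`)
of the diagonal part of the non-onsite `ℤ₂` symmetry `P_OBC` on an open chain of `n`
sites. -/
def phaseExp {n : ℕ} (z : Fin n → ZMod 2) : ℕ :=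
  ∑ i : Fin (n - 1),
    ((z ⟨i.val + 1, by have := i.isLt; omega⟩).val +
      (z ⟨i.val, by have := i.isLt; omega⟩).val *
        (z ⟨i.val + 1, by have := i.isLt; omega⟩).val)

theorem bond_sign (a b : ZMod 2) :
    (-1 : ℤ) ^ (b.val + a.val * b.val) * (-1 : ℤ) ^ ((b + 1).val + (a + 1).val * (b + 1).val) =
      (-1 : ℤ) ^ (a.val + b.val) := by
  revert a b
  decide

theorem prod_bond_sign (m : ℕ) (z : Fin (m + 1) → ZMod 2) :
    ∏ i : Fin m, (-1 : ℤ) ^ ((z i.castSucc).val + (z i.succ).val) =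
      (-1 : ℤ) ^ ((z 0).val + (z (Fin.last m)).val) := by
  induction m with
  | zero => simp [← two_mul]
  | succ k ih =>
    have h := ih (fun i => z i.castSucc)
    simp only [Fin.castSucc_zero] at h
    rw [Fin.prod_univ_castSucc]
    simp only [Fin.succ_castSucc, h, Fin.succ_last]
    -- The sign at site `k` enters squared.
    have hsq : ((-1 : ℤ) ^ (z (Fin.last k).castSucc).val) ^ 2 = 1 := by
      rw [← pow_mul, mul_comm, pow_mul]; simp
    simp only [pow_add]
    linear_combination (-1 : ℤ) ^ (z 0).val * (-1 : ℤ) ^ (z (Fin.last (k + 1))).val * hsq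

/-- The operator identity `P_OBC² = Z₁·Z_L` for the non-onsite `ℤ₂` symmetry with open
boundary conditions: for any spin configuration `z` on `n ≥ 2` sites, with `z̄` the
globally flipped configuration, `(−1)^{E(z)}·(−1)^{E(z̄)} = (−1)^{z_0 + z_{n−1}}`. -/
theorem stmt18 (n : ℕ) (hn : 2 ≤ n) (z : Fin n → ZMod 2) :
    (-1 : ℤ) ^ phaseExp z * (-1 : ℤ) ^ phaseExp (fun i => z i + 1) =
      (-1 : ℤ) ^ ((z ⟨0, by omega⟩).val + (z ⟨n - 1, by omega⟩).val) := by
  obtain ⟨m, rfl⟩ : ∃ m, n = m + 1 := ⟨n - 1, by omega⟩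
  refine Eq.trans ?_ (prod_bond_sign m z)
  unfold phaseExp
  rw [← Finset.prod_pow_eq_pow_sum, ← Finset.prod_pow_eq_pow_sum, ← Finset.prod_mul_distrib]
  exact Finset.prod_congr rfl fun i _ => bond_sign (z i.castSucc) (z i.succ)
end

section
/- Let L ≥ 1 and z : ℤ/L → ℤ/2 be a periodic spin configuration, and let n := the number of indices i ∈ ℤ/L with z(i) ≠ z(i+1) (the number of domain walls). Then n is even, and (−1)^{Σ_{i ∈ ℤ/L} ( val(z(i+1)) + val(z(i))·val(z(i+1)) )} = (−1)^{n/2}, where val takes the representative in {0,1}. -/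
/-!
For bits `a`, `b` the indicator of `a ≠ b` is `a + b - 2ab`. Summing over neighbouring sites, and using
that the sum of `z i` is invariant under the cyclic shift, gives `n = 2 (S - T)` with
`S = ∑ z (i + 1)` and `T = ∑ z i * z (i + 1)`. Hence `n / 2 = S - T`, which has the parity of the
exponent `S + T`.
-/

/-- Action phase of the non-onsite `ℤ₂` symmetry on a periodic chain of `L ≥ 1` sites:
for a periodic spin configuration `z : ℤ/L → ℤ/2`, the number `n` of domain walls
(indices `i` with `z i ≠ z (i+1)`) is even, and the diagonal phase
`(−1)^{Σ_i (z_{i+1} + z_i·z_{i+1})}` equals `(−1)^{n/2}`. -/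
theorem stmt19 (L : ℕ) [NeZero L] (z : ZMod L → ZMod 2) :
    2 ∣ (Finset.univ.filter (fun i : ZMod L => z i ≠ z (i + 1))).card ∧
    (-1 : ℤ) ^ (∑ i : ZMod L, ((z (i + 1)).val + (z i).val * (z (i + 1)).val)) =
      (-1 : ℤ) ^ ((Finset.univ.filter (fun i : ZMod L => z i ≠ z (i + 1))).card / 2) := by
  have hshift : ∑ i : ZMod L, (z (i + 1)).val = ∑ i : ZMod L, (z i).val :=
    Equiv.sum_comp (Equiv.addRight (1 : ZMod L)) fun i => (z i).val
  have hbit : ∀ a b : ZMod 2,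
      (if a ≠ b then 1 else 0) + 2 * (a.val * b.val) = a.val + b.val := by decide
  have hsum := Finset.sum_congr (rfl : (Finset.univ : Finset (ZMod L)) = Finset.univ)
    fun i _ => hbit (z i) (z (i + 1))
  rw [Finset.sum_add_distrib, Finset.sum_add_distrib, ← Finset.card_filter, ← Finset.mul_sum,
    ← hshift] at hsum
  refine ⟨by omega, ?_⟩
  rw [Finset.sum_add_distrib]
  -- The exponents `S + T` and `n / 2 = S - T` differ by the even number `2 * T`.
  have hexp : ∑ i : ZMod L, (z (i + 1)).val + ∑ i : ZMod L, (z i).val * (z (i + 1)).val =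
      (Finset.univ.filter (fun i : ZMod L => z i ≠ z (i + 1))).card / 2 +
        2 * ∑ i : ZMod L, (z i).val * (z (i + 1)).val := by omega
  rw [hexp, pow_add, pow_mul]
  simp
end
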